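/- Let G be a unified chain graph (UCG) over a finite vertex set V and let p = N(0, Σ) be a Gaussian distribution on ℝ^V with Σ positive definite. Then p satisfies Equation 1 (the chain-component factorization) and the zero restrictions of Equations 6–8 with respect to G if and only if p satisfies the block-recursive Markov property with respect to G: for every chain component K ∈ Cc(G) and every vertex i ∈ K, (B1) i ⊥_p Nd(K) ∖ K ∖ Fa(K) ∖ Mo(i) | Fa(K) ∪ Mo(i), (B2) i ⊥_p Nd(K) ∖ K ∖ Fa(i) ∖ Mo(K) | (K ∖ {i}) ∪ Fa(i) ∪ Mo(K), and (B3) i ⊥_p j | (K ∖ {i,j}) ∪ Pa(K) for all j ∈ K ∖ {i} with j ∉ Ne(i). -/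

import Mathlib

open Matrix MeasureTheory ProbabilityTheory

attribute [local instance] Classical.propDecidable

noncomputable section

variable {V : Type*}

/-- The submatrix of `S` with rows indexed by `X` and columns indexed by `Y`. -/
def msub (S : Matrix V V ℝ) (X Y : Finset V) : Matrix X Y ℝ :=
  Matrix.of fun i j => S i.1 j.1

/-- Conditional independence `X ⊥ Y | Z` for a centered Gaussian distribution with
positive definite covariance matrix `S`:  `Σ_{X,Y} − Σ_{X,Z} (Σ_{Z,Z})⁻¹ Σ_{Z,Y} = 0`. -/
def gaussCI [Fintype V] [DecidableEq V] (S : Matrix V V ℝ) (X Y Z : Finset V) : Prop :=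
  msub S X Y - msub S X Z * (msub S Z Z)⁻¹ * msub S Z Y = 0

/-- Pairwise disjointness of three sets. -/
def PDisj (X Y Z : Finset V) : Prop :=
  Disjoint X Y ∧ Disjoint X Z ∧ Disjoint Y Z

/-- Pairwise disjointness of four sets. -/
def PDisj4 (X Y W Z : Finset V) : Prop :=
  Disjoint X Y ∧ Disjoint X W ∧ Disjoint X Z ∧ Disjoint Y W ∧ Disjoint Y Z ∧ Disjoint W Z

/-- A graph with three kinds of edges: undirected (`undir`), solid directed (`solid`,
written `A → B`) and dashed directed (`dashed`, written `A ⇢ B`).  No axioms are imposed. -/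
structure PreGraph (V : Type*) where
  undir : V → V → Prop
  solid : V → V → Prop
  dashed : V → V → Prop

namespace PreGraph

variable (G : PreGraph V)

/-- There is an undirected edge between `a` and `b`. -/
def und (a b : V) : Prop := G.undir a b ∨ G.undir b a

/-- `a` and `b` are adjacent. -/
def adj (a b : V) : Prop :=
  G.und a b ∨ G.solid a b ∨ G.solid b a ∨ G.dashed a b ∨ G.dashed b a

/-- The edge between `a` and `b` is undirected or directed (solid or dashed) from `a` to `b`. -/
def fwd (a b : V) : Prop := G.und a b ∨ G.solid a b ∨ G.dashed a b

/-- A route in `G`: a sequence of nodes `nodes 0, nodes 1, …, nodes len` such that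
consecutive nodes are adjacent. -/
structure Route (G : PreGraph V) where
  len : ℕ
  nodes : ℕ → V
  adj_step : ∀ i < len, G.adj (nodes i) (nodes (i + 1))

/-- `c` is a collider node between `a` and `b`:  `a ⇢ c ⇠ b`, `a ⇢ c − b` (in either of the
two traversal directions) or `a ⇢ c ← b` (in either of the two traversal directions). -/
def colliderTriple (a c b : V) : Prop :=
  (G.dashed a c ∧ G.dashed b c) ∨
  (G.dashed a c ∧ G.und c b) ∨ (G.und a c ∧ G.dashed b c) ∨
  (G.dashed a c ∧ G.solid b c) ∨ (G.solid a c ∧ G.dashed b c)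

variable {G} in
/-- The node at position `k` of the route `ρ` is a collider node of `ρ`. -/
def Route.colliderNodeAt (ρ : G.Route) (k : ℕ) : Prop :=
  1 ≤ k ∧ k < ρ.len ∧ G.colliderTriple (ρ.nodes (k - 1)) (ρ.nodes k) (ρ.nodes (k + 1))

variable {G} in
/-- The positions `p, …, q` of `ρ` form a collider section of `ρ`, i.e. a maximal undirected
subroute `C1 − ⋯ − Cn` of `ρ` such that `A → C1 − ⋯ − Cn ← B` is a subroute of `ρ`. -/
def Route.colliderSectionOcc (ρ : G.Route) (p q : ℕ) : Prop :=
  1 ≤ p ∧ p ≤ q ∧ q + 1 ≤ ρ.len ∧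
  (∀ m, p ≤ m → m < q → G.und (ρ.nodes m) (ρ.nodes (m + 1))) ∧
  G.solid (ρ.nodes (p - 1)) (ρ.nodes p) ∧ G.solid (ρ.nodes (q + 1)) (ρ.nodes q)

variable {G} in
/-- The node at position `k` of `ρ` lies in a collider section of `ρ`. -/
def Route.inColliderSectionAt (ρ : G.Route) (k : ℕ) : Prop :=
  ∃ p q, ρ.colliderSectionOcc p q ∧ p ≤ k ∧ k ≤ q

variable {G} in
/-- The route `ρ` is `Z`-open: (i) all collider nodes are in `Z`, (ii) every collider
section contains some node of `Z`, and (iii) every node which is neither a collider node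
nor inside a collider section is outside `Z`. -/
def Route.IsZOpen (ρ : G.Route) (Z : Finset V) : Prop :=
  (∀ k, ρ.colliderNodeAt k → ρ.nodes k ∈ Z) ∧
  (∀ p q, ρ.colliderSectionOcc p q → ∃ m, p ≤ m ∧ m ≤ q ∧ ρ.nodes m ∈ Z) ∧
  (∀ k ≤ ρ.len, ¬ ρ.colliderNodeAt k → ¬ ρ.inColliderSectionAt k → ρ.nodes k ∉ Z)

variable {G} in
/-- A pure collider route (with at least one edge): every intermediate node is a collider
node or lies in a collider section of the route. -/
def Route.IsPureCollider (ρ : G.Route) : Prop :=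
  1 ≤ ρ.len ∧ ∀ k, 0 < k → k < ρ.len → ρ.colliderNodeAt k ∨ ρ.inColliderSectionAt k

/-- Separation `X ⊥_G Y | Z`: there is no `Z`-open route in `G` between a node of `X` and a
node of `Y`. -/
def Sep (X Y Z : Finset V) : Prop :=
  ¬ ∃ ρ : G.Route,
      ((ρ.nodes 0 ∈ X ∧ ρ.nodes ρ.len ∈ Y) ∨ (ρ.nodes 0 ∈ Y ∧ ρ.nodes ρ.len ∈ X)) ∧
      ρ.IsZOpen Z

section Finite

variable [Fintype V] [DecidableEq V]

/-- The fathers of `X`: nodes `b` with `b → a` in `G` for some `a ∈ X`. -/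
def fa (X : Finset V) : Finset V := Finset.univ.filter fun b => ∃ a ∈ X, G.solid b a

/-- The mothers of `X`: nodes `b` with `b ⇢ a` in `G` for some `a ∈ X`. -/
def mo (X : Finset V) : Finset V := Finset.univ.filter fun b => ∃ a ∈ X, G.dashed b a

/-- The parents of `X`. -/
def pa (X : Finset V) : Finset V := G.fa X ∪ G.mo X

/-- The neighbors of `X`: nodes `b` with `b − a` in `G` for some `a ∈ X`. -/
def nb (X : Finset V) : Finset V := Finset.univ.filter fun b => ∃ a ∈ X, G.und b a

/-- There is a descending route from `a` to `b`: all edges undirected or directed in the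
direction of travel, containing at least one directed edge. -/
def descends (a b : V) : Prop :=
  ∃ (n : ℕ) (f : ℕ → V), f 0 = a ∧ f n = b ∧ (∀ i < n, G.fwd (f i) (f (i + 1))) ∧
    ∃ i < n, G.solid (f i) (f (i + 1)) ∨ G.dashed (f i) (f (i + 1))

/-- The non-descendants of `X`. -/
def nd (X : Finset V) : Finset V := Finset.univ.filter fun b => ¬ ∃ a ∈ X, G.descends a b

/-- Connectivity by undirected routes. -/
def uconn : V → V → Prop := Relation.ReflTransGen G.und

/-- The chain component containing `i`. -/
def cc (i : V) : Finset V := Finset.univ.filter fun j => G.uconn i j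

/-- The set of chain components of `G`. -/
def ccs : Finset (Finset V) := Finset.univ.image G.cc

/-- The nodes incident to some edge of `G`. -/
def verts : Finset V := Finset.univ.filter fun a => ∃ b, G.adj a b

/-- `π` is a topological ordering of the chain components: it is constant on components and
increases along directed edges. -/
def IsTopoOrder (π : V → ℕ) : Prop :=
  (∀ a b, G.uconn a b → π a = π b) ∧ ∀ a b, G.solid a b ∨ G.dashed a b → π a < π b

/-- Equation 1: for every topological ordering of the chain components, each component `K`
is independent of the preceding components minus `Pa(K)` given `Pa(K)`. -/
def eq1 (S : Matrix V V ℝ) : Prop :=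
  ∀ π : V → ℕ, G.IsTopoOrder π → ∀ i : V,
    gaussCI S (G.cc i) ((Finset.univ.filter fun b => π b < π i) \ G.pa (G.cc i))
      (G.pa (G.cc i))

/-- The regression coefficients `β_K = Σ_{K,Pa(K)} (Σ_{Pa(K),Pa(K)})⁻¹`. -/
def beta (S : Matrix V V ℝ) (K : Finset V) : Matrix K (G.pa K) ℝ :=
  msub S K (G.pa K) * (msub S (G.pa K) (G.pa K))⁻¹

/-- The conditional covariance matrix `Λ_K`. -/
def lam (S : Matrix V V ℝ) (K : Finset V) : Matrix K K ℝ :=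
  msub S K K - msub S K (G.pa K) * (msub S (G.pa K) (G.pa K))⁻¹ * msub S (G.pa K) K

/-- The precision matrix `Ω = (Σ_{K ∪ Pa(K), K ∪ Pa(K)})⁻¹`. -/
def om (S : Matrix V V ℝ) (K : Finset V) : Matrix ↥(K ∪ G.pa K) ↥(K ∪ G.pa K) ℝ :=
  (msub S (K ∪ G.pa K) (K ∪ G.pa K))⁻¹

/-- Equation 6: `(β_K)_{i,j} = 0` for all `i ∈ K` and `j ∈ Mo(K) ∖ Mo(i)`. -/
def eq6 (S : Matrix V V ℝ) : Prop :=
  ∀ K ∈ G.ccs, ∀ i (hi : i ∈ K), ∀ j (hj : j ∈ G.pa K),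
    j ∈ G.mo K → j ∉ G.mo {i} → G.beta S K ⟨i, hi⟩ ⟨j, hj⟩ = 0

/-- Equation 7: `Ω_{i,j} = 0` for all `i ∈ K` and `j ∈ Fa(K) ∖ Fa(i)`. -/
def eq7 (S : Matrix V V ℝ) : Prop :=
  ∀ K ∈ G.ccs, ∀ i (hi : i ∈ K), ∀ j (hj : j ∈ G.pa K),
    j ∈ G.fa K → j ∉ G.fa {i} →
    G.om S K ⟨i, Finset.mem_union_left _ hi⟩ ⟨j, Finset.mem_union_right _ hj⟩ = 0

/-- Equation 8: `(Λ_K⁻¹)_{i,j} = 0` for all `i ∈ K` and `j ∈ K ∖ ({i} ∪ Ne(i))`. -/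
def eq8 (S : Matrix V V ℝ) : Prop :=
  ∀ K ∈ G.ccs, ∀ i (hi : i ∈ K), ∀ j (hj : j ∈ K),
    j ≠ i → j ∉ G.nb {i} → (G.lam S K)⁻¹ ⟨i, hi⟩ ⟨j, hj⟩ = 0

/-- `p` satisfies Equation 1 and the zero restrictions of Equations 6–8 w.r.t. `G`. -/
def eqs (S : Matrix V V ℝ) : Prop := G.eq1 S ∧ G.eq6 S ∧ G.eq7 S ∧ G.eq8 S

/-- The global Markov property with respect to `G`, for an abstract ternary
(conditional-independence) relation `I`. -/
def globalMP (I : Finset V → Finset V → Finset V → Prop) : Prop :=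
  ∀ X Y Z : Finset V, PDisj X Y Z → G.Sep X Y Z → I X Y Z

/-- The block-recursive Markov property (B1)–(B3) with respect to `G`. -/
def blockRecMP (I : Finset V → Finset V → Finset V → Prop) : Prop :=
  ∀ K ∈ G.ccs, ∀ i ∈ K,
    I {i} (((G.nd K \ K) \ G.fa K) \ G.mo {i}) (G.fa K ∪ G.mo {i}) ∧
    I {i} (((G.nd K \ K) \ G.fa {i}) \ G.mo K) ((K \ {i}) ∪ G.fa {i} ∪ G.mo K) ∧
    ∀ j ∈ K, j ≠ i → j ∉ G.nb {i} → I {i} {j} ((K \ {i, j}) ∪ G.pa K)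

/-- The pairwise Markov property (P1)–(P2) with respect to `G`. -/
def pairwiseMP (I : Finset V → Finset V → Finset V → Prop) : Prop :=
  ∀ i j : V, i ≠ j → ¬ G.adj i j → ∀ K ∈ G.ccs, i ∈ K →
    (j ∈ ((G.nd {i} \ K) \ G.fa K) \ G.mo {i} → I {i} {j} ((G.nd {i} \ K) \ {j})) ∧
    (j ∈ ((G.nd {i} \ {i}) \ G.fa {i}) \ G.mo K → I {i} {j} (G.nd {i} \ {i, j}))

/-- The local Markov property (L1)–(L2) with respect to `G`. -/
def localMP (I : Finset V → Finset V → Finset V → Prop) : Prop :=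
  ∀ K ∈ G.ccs, ∀ i ∈ K,
    I {i} (((G.nd {i} \ K) \ G.fa K) \ G.mo {i}) (G.fa K ∪ G.mo {i}) ∧
    I {i} ((((G.nd {i} \ {i}) \ G.pa {i}) \ G.nb {i}) \ G.mo (G.nb {i}))
      (G.pa {i} ∪ G.nb {i} ∪ G.mo (G.nb {i}))

/-- The subgraph `G^U`: it keeps the edge `A ⊸ B` (with its type and orientation) iff `G`
has a route `A ⊸ B ⊸ ⋯ ⊸ C` with `C ∈ U`, all edges undirected or directed in the
direction of travel, and no subroute `R ⇢ S − T`. -/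
def goodFrom (U : Finset V) (a b : V) : Prop :=
  ∃ (f : ℕ → V) (n : ℕ), 1 ≤ n ∧ f 0 = a ∧ f 1 = b ∧ f n ∈ U ∧
    (∀ i < n, G.fwd (f i) (f (i + 1))) ∧
    ∀ i, i + 2 ≤ n → ¬ (G.dashed (f i) (f (i + 1)) ∧ G.und (f (i + 1)) (f (i + 2)))

/-- The graph `G^U`. -/
def derived (U : Finset V) : PreGraph V where
  undir a b := G.undir a b ∧ G.goodFrom U a b
  solid a b := G.solid a b ∧ G.goodFrom U a b
  dashed a b := G.dashed a b ∧ G.goodFrom U a b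

/-- The set `Y'` used in Lemmas 2 and 3:
`Y' = {B' ∈ V(G^{X∪Y∪Z}) ∖ (X ∪ Z) : X ⊥_{G^{X∪Y∪Z}} B' | Z}`. -/
def derivedYp (X Y Z : Finset V) : Finset V :=
  ((G.derived (X ∪ Y ∪ Z)).verts \ (X ∪ Z)).filter fun b =>
    (G.derived (X ∪ Y ∪ Z)).Sep X {b} Z

/-- The set `X' = V(G^{X∪Y∪Z}) ∖ (Y' ∪ Z)` used in Lemmas 2 and 3. -/
def derivedXp (X Y Z : Finset V) : Finset V :=
  (G.derived (X ∪ Y ∪ Z)).verts \ (G.derivedYp X Y Z ∪ Z)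

end Finite

end PreGraph

/-- A chain graph: at most one edge between any pair of distinct nodes (undirected, solid
directed, or dashed directed) and no semidirected cycles. -/
structure ChainGraph (V : Type*) extends PreGraph V where
  undir_symm : ∀ a b, toPreGraph.undir a b → toPreGraph.undir b a
  undir_irrefl : ∀ a, ¬ toPreGraph.undir a a
  solid_irrefl : ∀ a, ¬ toPreGraph.solid a a
  dashed_irrefl : ∀ a, ¬ toPreGraph.dashed a a
  undir_not_solid : ∀ a b, toPreGraph.undir a b → ¬ toPreGraph.solid a b
  undir_not_dashed : ∀ a b, toPreGraph.undir a b → ¬ toPreGraph.dashed a b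
  solid_not_solid : ∀ a b, toPreGraph.solid a b → ¬ toPreGraph.solid b a
  solid_not_dashed : ∀ a b, toPreGraph.solid a b → ¬ toPreGraph.dashed a b
  solid_not_dashed_rev : ∀ a b, toPreGraph.solid a b → ¬ toPreGraph.dashed b a
  dashed_not_dashed : ∀ a b, toPreGraph.dashed a b → ¬ toPreGraph.dashed b a
  no_semidirected_cycle : ¬ ∃ (f : ℕ → V) (n : ℕ), 1 ≤ n ∧ f n = f 0 ∧
    (toPreGraph.solid (f 0) (f 1) ∨ toPreGraph.dashed (f 0) (f 1)) ∧
    ∀ i < n, toPreGraph.fwd (f i) (f (i + 1))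

namespace ChainGraph

variable (G : ChainGraph V)

/-- An LWF chain graph: no dashed directed edges. -/
def IsLWF : Prop := ∀ a b, ¬ G.toPreGraph.dashed a b

/-- An AMP chain graph: no solid directed edges. -/
def IsAMP : Prop := ∀ a b, ¬ G.toPreGraph.solid a b

/-- A unified chain graph: `Fa(K) ∩ Mo(K) = ∅` for every chain component `K`. -/
def IsUCG [Fintype V] [DecidableEq V] : Prop :=
  ∀ K ∈ G.toPreGraph.ccs, Disjoint (G.toPreGraph.fa K) (G.toPreGraph.mo K)

end ChainGraph


/-- The AMP chain graph obtained from `G` by deleting every solid directed edge. -/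
def ChainGraph.dropSolid (G : ChainGraph V) : ChainGraph V where
  undir := G.toPreGraph.undir
  solid _ _ := False
  dashed := G.toPreGraph.dashed
  undir_symm := G.undir_symm
  undir_irrefl := G.undir_irrefl
  solid_irrefl _ h := h
  dashed_irrefl := G.dashed_irrefl
  undir_not_solid _ _ _ h := h
  undir_not_dashed := G.undir_not_dashed
  solid_not_solid _ _ h := h.elim
  solid_not_dashed _ _ h := h.elim
  solid_not_dashed_rev _ _ h := h.elim
  dashed_not_dashed := G.dashed_not_dashed
  no_semidirected_cycle := fun ⟨f, n, hn, hcyc, hstart, hsteps⟩ =>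
    G.no_semidirected_cycle ⟨f, n, hn, hcyc, Or.inr (hstart.resolve_left id),
      fun i hi => (hsteps i hi).imp id (Or.imp False.elim id)⟩

/-- The restriction of `ω : V → ℝ` to the coordinates in `S`. -/
def marg (S : Finset V) : (V → ℝ) → (S → ℝ) := fun ω s => ω s.1

lemma marg_measurable (S : Finset V) : Measurable (marg (V := V) S) :=
  measurable_pi_lambda _ fun s => measurable_pi_apply s.1

/-- Conditional independence of the coordinate tuples indexed by `X` and `Y` given the
coordinate tuple indexed by `Z`, for a distribution `μ` on `ℝ^V`. -/
def mCI [Fintype V] (μ : Measure (V → ℝ)) [IsFiniteMeasure μ] (X Y Z : Finset V) : Prop :=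
  CondIndepFun (MeasurableSpace.comap (marg Z) inferInstance) ((marg_measurable Z).comap_le)
    (marg X) (marg Y) μ

/-- A probability distribution `μ` on `ℝ^V` satisfies the global Markov property with
respect to `G`. -/
def measGlobalMarkov [Fintype V] [DecidableEq V] (G : PreGraph V) (μ : Measure (V → ℝ))
    [IsFiniteMeasure μ] : Prop :=
  ∀ X Y Z : Finset V, PDisj X Y Z → G.Sep X Y Z → mCI μ X Y Z

/-- A graphoid over `V`: a ternary relation on pairwise disjoint subsets of `V` satisfying
symmetry, decomposition, weak union, contraction and intersection. -/
structure Graphoid (V : Type*) [DecidableEq V] where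
  rel : Finset V → Finset V → Finset V → Prop
  symmetry : ∀ X Y Z : Finset V, PDisj X Y Z → rel X Y Z → rel Y X Z
  decomposition : ∀ X Y W Z : Finset V, PDisj4 X Y W Z → rel X (Y ∪ W) Z → rel X Y Z
  weakUnion : ∀ X Y W Z : Finset V, PDisj4 X Y W Z → rel X (Y ∪ W) Z → rel X Y (Z ∪ W)
  contraction : ∀ X Y W Z : Finset V, PDisj4 X Y W Z →
    rel X Y (Z ∪ W) → rel X W Z → rel X (Y ∪ W) Z
  intersection : ∀ X Y W Z : Finset V, PDisj4 X Y W Z →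
    rel X Y (Z ∪ W) → rel X W (Z ∪ Y) → rel X (Y ∪ W) Z

/-- The conditional variance `Σ_{a,a|B} = Σ_{a,a} − Σ_{a,B} (Σ_{B,B})⁻¹ Σ_{B,a}`. -/
def condVar [Fintype V] [DecidableEq V] (S : Matrix V V ℝ) (a : V) (B : Finset V) : ℝ :=
  S a a - ∑ b₁ : B, ∑ b₂ : B, S a b₁.1 * (msub S B B)⁻¹ b₁ b₂ * S b₂.1 a

section Regression

variable [DecidableEq V]

/-- Extension by zero of a vector indexed by `W` to a vector indexed by `V`. -/
def extendZero (W : Finset V) (x : W → ℝ) : V → ℝ :=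
  fun v => if h : v ∈ W then x ⟨v, h⟩ else 0

lemma extendZero_of_mem {W : Finset V} (x : W → ℝ) {v : V} (h : v ∈ W) :
    extendZero W x v = x ⟨v, h⟩ := dif_pos h

lemma extendZero_of_notMem {W : Finset V} (x : W → ℝ) {v : V} (h : v ∉ W) :
    extendZero W x v = 0 := dif_neg h

lemma isUnit_det_msub {S : Matrix V V ℝ} (hS : S.PosDef) (W : Finset V) :
    IsUnit (msub S W W).det :=
  (Matrix.isUnit_iff_isUnit_det _).mp
    (hS.submatrix (e := (Subtype.val : W → V)) Subtype.val_injective).isUnit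

/-- The row of `Σ_{X,Z} (Σ_{Z,Z})⁻¹` indexed by `i`, extended by zero. -/
def regCoef (S : Matrix V V ℝ) (X Z : Finset V) (i : X) : V → ℝ :=
  extendZero Z ((msub S X Z * (msub S Z Z)⁻¹) i)

/-- The row of `(Σ_{W,W})⁻¹` indexed by `i`, extended by zero. -/
def precRow (S : Matrix V V ℝ) (W : Finset V) (i : W) : V → ℝ :=
  extendZero W ((msub S W W)⁻¹ i)

lemma precRow_of_notMem (S : Matrix V V ℝ) {W : Finset V} (i : W) {v : V} (hv : v ∉ W) :
    precRow S W i v = 0 := extendZero_of_notMem _ hv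

/-- The diagonal entry of the precision matrix is nonzero. -/
lemma precRow_self_ne_zero {S : Matrix V V ℝ} (hS : S.PosDef) {W : Finset V} (i : W) :
    precRow S W i i ≠ 0 := by
  rw [precRow, extendZero_of_mem _ i.2]
  exact (hS.submatrix (e := (Subtype.val : W → V)) Subtype.val_injective).inv.diag_pos.ne'

/-- The coefficients on `P` obtained from the linear combination `r` of the variables in `K ∪ P` by
replacing each variable in `K` by its regression on `P`. -/
def projCoef (S : Matrix V V ℝ) (K P : Finset V) (r : V → ℝ) : V → ℝ :=
  fun v => (∑ a : K, r a * regCoef S K P a v) + if v ∈ P then r v else 0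

lemma projCoef_of_notMem (S : Matrix V V ℝ) (K : Finset V) {P : Finset V} (r : V → ℝ) {v : V}
    (hv : v ∉ P) : projCoef S K P r v = 0 := by
  simp [projCoef, hv, regCoef, extendZero_of_notMem]

variable [Fintype V]

lemma extendZero_vecMul (S : Matrix V V ℝ) (W : Finset V) (x : W → ℝ) (k : V) :
    (extendZero W x ᵥ* S) k = ∑ w : W, x w * S w k := by
  rw [Matrix.vecMul, dotProduct, ← Finset.sum_subset (Finset.subset_univ W)
    fun v _ hv => by rw [extendZero_of_notMem x hv, zero_mul], ← Finset.sum_coe_sort]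
  exact Finset.sum_congr rfl fun w _ => by rw [extendZero_of_mem x w.2]

lemma eq_zero_of_vecMul_eq_zero_on {S : Matrix V V ℝ} (hS : S.PosDef) {W : Finset V}
    {d : V → ℝ} (hd : ∀ v, v ∉ W → d v = 0) (h : ∀ k ∈ W, (d ᵥ* S) k = 0) : d = 0 := by
  by_contra hne
  have hpos := hS.dotProduct_mulVec_pos hne
  rw [Matrix.dotProduct_mulVec] at hpos
  refine hpos.ne' (Finset.sum_eq_zero fun k _ => ?_)
  by_cases hk : k ∈ W
  · simp [h k hk]
  · simp [hd k hk]

lemma eq_of_vecMul_eq_on {S : Matrix V V ℝ} (hS : S.PosDef) {W : Finset V}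
    {c d : V → ℝ} (hc : ∀ v, v ∉ W → c v = 0) (hd : ∀ v, v ∉ W → d v = 0)
    (h : ∀ k ∈ W, (c ᵥ* S) k = (d ᵥ* S) k) : c = d :=
  sub_eq_zero.mp <| eq_zero_of_vecMul_eq_zero_on (W := W) hS
    (fun v hv => by simp [hc v hv, hd v hv])
    (fun k hk => by simp [Matrix.sub_vecMul, h k hk])

lemma regCoef_vecMul_eq_mul (S : Matrix V V ℝ) (X Y Z : Finset V) (i : X) (k : Y) :
    (regCoef S X Z i ᵥ* S) k = (msub S X Z * (msub S Z Z)⁻¹ * msub S Z Y) i k := by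
  rw [regCoef, extendZero_vecMul]
  rfl

lemma regCoef_vecMul {S : Matrix V V ℝ} (hS : S.PosDef) (X Z : Finset V) (i : X) {k : V}
    (hk : k ∈ Z) : (regCoef S X Z i ᵥ* S) k = S i k := by
  rw [regCoef_vecMul_eq_mul S X Z Z i ⟨k, hk⟩,
    Matrix.nonsing_inv_mul_cancel_right _ _ (isUnit_det_msub hS Z)]
  rfl

lemma regCoef_eq {S : Matrix V V ℝ} (hS : S.PosDef) {X Z : Finset V} (i : X) {c : V → ℝ}
    (hc : ∀ v, v ∉ Z → c v = 0) (h : ∀ k ∈ Z, S i k = (c ᵥ* S) k) : regCoef S X Z i = c :=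
  eq_of_vecMul_eq_on hS (fun _ hv => extendZero_of_notMem _ hv) hc
    fun k hk => (regCoef_vecMul hS X Z i hk).trans (h k hk)

lemma gaussCI_iff_exists {S : Matrix V V ℝ} (hS : S.PosDef) (X Y Z : Finset V) :
    gaussCI S X Y Z ↔ ∀ i ∈ X, ∃ c : V → ℝ, (∀ v, v ∉ Z → c v = 0) ∧
      ∀ k, k ∈ Z ∨ k ∈ Y → S i k = (c ᵥ* S) k := by
  constructor
  · intro h i hi
    refine ⟨regCoef S X Z ⟨i, hi⟩, fun _ hv => extendZero_of_notMem _ hv, ?_⟩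
    rintro k (hk | hk)
    · exact (regCoef_vecMul hS X Z ⟨i, hi⟩ hk).symm
    · rw [regCoef_vecMul_eq_mul S X Y Z ⟨i, hi⟩ ⟨k, hk⟩]
      exact congr_fun₂ (sub_eq_zero.mp h) ⟨i, hi⟩ ⟨k, hk⟩
  · intro h
    refine sub_eq_zero.mpr (Matrix.ext fun i k => ?_)
    obtain ⟨c, hc, hck⟩ := h i i.2
    rw [← regCoef_vecMul_eq_mul, regCoef_eq hS i hc fun k hk => hck k (Or.inl hk)]
    exact hck k (Or.inr k.2)

lemma gaussCI_singleton_iff {S : Matrix V V ℝ} (hS : S.PosDef) (i : V) (Y Z : Finset V) :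
    gaussCI S {i} Y Z ↔ ∃ c : V → ℝ, (∀ v, v ∉ Z → c v = 0) ∧
      ∀ k, k ∈ Z ∨ k ∈ Y → S i k = (c ᵥ* S) k := by
  simp [gaussCI_iff_exists hS]

lemma precRow_vecMul {S : Matrix V V ℝ} (hS : S.PosDef) {W : Finset V} (i : W) {k : V}
    (hk : k ∈ W) : (precRow S W i ᵥ* S) k = if k = i then 1 else 0 := by
  rw [precRow, extendZero_vecMul]
  have := congr_fun₂ (Matrix.nonsing_inv_mul _ (isUnit_det_msub hS W)) i ⟨k, hk⟩
  rw [Matrix.mul_apply, Matrix.one_apply] at this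
  refine this.trans (if_congr ?_ rfl rfl)
  rw [Subtype.ext_iff, eq_comm]

lemma eq_smul_precRow {S : Matrix V V ℝ} (hS : S.PosDef) {W : Finset V} (i : W) {r : V → ℝ}
    (hr : ∀ v, v ∉ W → r v = 0) (h : ∀ k ∈ W, k ≠ i → (r ᵥ* S) k = 0) :
    r = (r ᵥ* S) i • precRow S W i := by
  refine eq_of_vecMul_eq_on hS hr (fun v hv => by simp [precRow_of_notMem S i hv]) fun k hk => ?_
  rw [Matrix.smul_vecMul, Pi.smul_apply, precRow_vecMul hS i hk]
  by_cases hki : k = i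
  · simp [hki]
  · simp [hki, h k hk hki]

/-- Regressing `i` on `W ∖ {i}` uses only the variables in `Z` iff the precision matrix of `W`
vanishes at `(i, j)` for `j ∈ W ∖ Z ∖ {i}`. -/
lemma exists_coef_iff_precRow {S : Matrix V V ℝ} (hS : S.PosDef) {W Z : Finset V} (i : W)
    (hZ : ∀ v ∈ Z, v ∈ W ∧ v ≠ i) :
    (∃ c : V → ℝ, (∀ v, v ∉ Z → c v = 0) ∧ ∀ k ∈ W, k ≠ i → S i k = (c ᵥ* S) k) ↔
      ∀ j ∈ W, j ≠ i → j ∉ Z → precRow S W i j = 0 := by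
  constructor
  · rintro ⟨c, hc, hck⟩ j hj hji hjZ
    have hiZ : (i : V) ∉ Z := fun h => (hZ i h).2 rfl
    set r : V → ℝ := Pi.single (i : V) 1 - c with hrdef
    have hr := eq_smul_precRow hS i (r := r)
      (fun v hv => by
        have hvi : v ≠ i := fun h => hv (h ▸ i.2)
        simp [hrdef, hc v fun h => hv (hZ v h).1, hvi])
      (fun k hk hki => by
        simp [hrdef, Matrix.sub_vecMul, ← hck k hk hki])
    have hri : r i = 1 := by simp [hrdef, hc i hiZ]
    have hrj : r j = 0 := by simp [hrdef, hc j hjZ, hji]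
    have hne : (r ᵥ* S) i ≠ 0 := by
      intro h0
      rw [h0, zero_smul] at hr
      simp [hr] at hri
    rw [hr] at hrj
    exact (mul_eq_zero.mp hrj).resolve_left hne
  · intro h
    have hne := precRow_self_ne_zero hS i
    refine ⟨Pi.single (i : V) 1 - (precRow S W i i)⁻¹ • precRow S W i, fun v hv => ?_,
      fun k hk hki => ?_⟩
    · by_cases hvi : v = i
      · simp [hvi, hne]
      · by_cases hvW : v ∈ W
        · simp [hvi, h v hvW hvi hv]
        · simp [hvi, precRow_of_notMem S i hvW]
    · simp [Matrix.sub_vecMul, Matrix.smul_vecMul, precRow_vecMul hS i hk, hki]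

lemma vecMul_eq_add_projCoef (S : Matrix V V ℝ) {K P : Finset V} (hKP : Disjoint K P)
    {r : V → ℝ} (hr : ∀ v, v ∉ K ∪ P → r v = 0) (k : V) :
    (r ᵥ* S) k =
      (∑ a : K, r a * (S a k - (regCoef S K P a ᵥ* S) k)) + (projCoef S K P r ᵥ* S) k := by
  have hsplit : r = (fun v => if v ∈ K then r v else 0) + fun v => if v ∈ P then r v else 0 := by
    funext v
    by_cases hK : v ∈ K
    · simp [hK, Finset.disjoint_left.mp hKP hK]
    · by_cases hP : v ∈ P
      · simp [hK, hP]
      · simp [hK, hP, hr v (by simp [hK, hP])]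
  have hproj : projCoef S K P r =
      (∑ a : K, r a • regCoef S K P a) + fun v => if v ∈ P then r v else 0 := by
    funext v
    simp [projCoef, Finset.sum_apply]
  have hK : ((fun v => if v ∈ K then r v else 0) ᵥ* S) k = ∑ x : K, r x * S x k := by
    rw [Finset.sum_coe_sort K fun a => r a * S a k, Matrix.vecMul, dotProduct]
    simp [ite_mul, Finset.sum_ite_mem]
  rw [hproj]
  conv_lhs => rw [hsplit]
  rw [Matrix.add_vecMul, Matrix.add_vecMul, Pi.add_apply, Pi.add_apply, hK, Matrix.sum_vecMul,
    Finset.sum_apply]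
  simp only [Matrix.smul_vecMul, Pi.smul_apply, smul_eq_mul, mul_sub, Finset.sum_sub_distrib]
  ring

lemma projCoef_eq_zero {S : Matrix V V ℝ} (hS : S.PosDef) {K P : Finset V} (hKP : Disjoint K P)
    {r : V → ℝ} (hr : ∀ v, v ∉ K ∪ P → r v = 0) (h : ∀ k ∈ P, (r ᵥ* S) k = 0) :
    projCoef S K P r = 0 :=
  eq_zero_of_vecMul_eq_zero_on hS (fun _ hv => projCoef_of_notMem S K r hv) fun k hk => by
    have := vecMul_eq_add_projCoef S hKP hr k
    simpa [regCoef_vecMul hS K P _ hk, h k hk] using this.symm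

/-- If `K ⊥ Y | P`, then a linear combination of the variables in `K ∪ P` that is uncorrelated
with `P` is uncorrelated with `Y`. -/
lemma vecMul_eq_zero_of_gaussCI {S : Matrix V V ℝ} (hS : S.PosDef) {K P Y : Finset V}
    (hKP : Disjoint K P) (hCI : gaussCI S K Y P) {r : V → ℝ} (hr : ∀ v, v ∉ K ∪ P → r v = 0)
    (h : ∀ k ∈ P, (r ᵥ* S) k = 0) {k : V} (hk : k ∈ Y) : (r ᵥ* S) k = 0 := by
  have hreg (a : K) : (regCoef S K P a ᵥ* S) k = S a k := by
    rw [regCoef_vecMul_eq_mul S K Y P a ⟨k, hk⟩]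
    exact (congr_fun₂ (sub_eq_zero.mp hCI) a ⟨k, hk⟩).symm
  simp [vecMul_eq_add_projCoef S hKP hr k, projCoef_eq_zero hS hKP hr h, hreg]

/-- The inverse of a conditional covariance matrix is a block of the precision matrix. -/
lemma inv_condCov_apply {S : Matrix V V ℝ} (hS : S.PosDef) {K P : Finset V}
    (hKP : Disjoint K P) (i j : K) :
    (msub S K K - msub S K P * (msub S P P)⁻¹ * msub S P K)⁻¹ i j =
      precRow S (K ∪ P) ⟨i, Finset.mem_union_left _ i.2⟩ j := by
  have hinv : Matrix.of (fun a b : K => precRow S (K ∪ P) ⟨a, Finset.mem_union_left _ a.2⟩ b) *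
      (msub S K K - msub S K P * (msub S P P)⁻¹ * msub S P K) = 1 := by
    ext a b
    set r := precRow S (K ∪ P) ⟨a, Finset.mem_union_left _ a.2⟩ with hr
    have hsupp : ∀ v, v ∉ K ∪ P → r v = 0 := fun v hv => precRow_of_notMem S _ hv
    have hproj : projCoef S K P r = 0 := projCoef_eq_zero hS hKP hsupp fun k hk => by
      rw [hr, precRow_vecMul hS _ (Finset.mem_union_right _ hk), if_neg]
      rintro rfl
      exact Finset.disjoint_left.mp hKP a.2 hk
    have hb := precRow_vecMul hS ⟨a.1, Finset.mem_union_left P a.2⟩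
      (Finset.mem_union_left P b.2)
    have hsum := vecMul_eq_add_projCoef S hKP hsupp b
    rw [hproj, Matrix.zero_vecMul, Pi.zero_apply, add_zero] at hsum
    rw [Matrix.mul_apply, Matrix.one_apply]
    refine Eq.trans ?_ (hsum.symm.trans (hb.trans (if_congr ?_ rfl rfl)))
    · refine Finset.sum_congr rfl fun x _ => ?_
      rw [Matrix.sub_apply, ← regCoef_vecMul_eq_mul]
      rfl
    · rw [Subtype.ext_iff, eq_comm]
  rw [Matrix.inv_eq_left_inv hinv]
  rfl

end Regression

namespace PreGraph

variable (G : PreGraph V)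

/-- There is a directed edge, solid or dashed, from `a` to `b`. -/
def dir (a b : V) : Prop := G.solid a b ∨ G.dashed a b

variable {G}

lemma fwd_of_dir {a b : V} (h : G.dir a b) : G.fwd a b := Or.inr h

lemma und_symm {a b : V} (h : G.und a b) : G.und b a := Or.symm h

lemma uconn_symm {a b : V} (h : G.uconn a b) : G.uconn b a := by
  induction h with
  | refl => exact .refl
  | tail _ hbc ih => exact ih.head (und_symm hbc)

lemma reach_of_uconn {a b : V} (h : G.uconn a b) : Relation.ReflTransGen G.fwd a b :=
  
  Relation.ReflTransGen.mono (p := G.fwd) (fun _ _ => Or.inl) a b h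

lemma exists_path_iff_reflTransGen {r : V → V → Prop} {a b : V} :
    (∃ (n : ℕ) (f : ℕ → V), f 0 = a ∧ f n = b ∧ ∀ i < n, r (f i) (f (i + 1))) ↔
      Relation.ReflTransGen r a b := by
  constructor
  · rintro ⟨n, f, rfl, rfl, hf⟩
    induction n with
    | zero => exact .refl
    | succ n ih => exact (ih fun i hi => hf i (by omega)).tail (hf n n.lt_succ_self)
  · intro h
    induction h using Relation.ReflTransGen.head_induction_on with
    | refl => exact ⟨0, fun _ => b, rfl, rfl, by simp⟩
    | @head a c hac _ ih =>
      obtain ⟨n, f, rfl, rfl, hf⟩ := ih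
      refine ⟨n + 1, fun k => Nat.casesOn k a f, rfl, rfl, fun i hi => ?_⟩
      cases i with
      | zero => exact hac
      | succ i => exact hf i (by omega)

lemma descends_iff {a b : V} : G.descends a b ↔
    ∃ x y, Relation.ReflTransGen G.fwd a x ∧ G.dir x y ∧ Relation.ReflTransGen G.fwd y b := by
  constructor
  · rintro ⟨n, f, rfl, rfl, hf, i, hi, hdir⟩
    refine ⟨f i, f (i + 1), ?_, hdir, ?_⟩
    · exact exists_path_iff_reflTransGen.mp ⟨i, f, rfl, rfl, fun k hk => hf k (hk.trans hi)⟩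
    · refine exists_path_iff_reflTransGen.mp ⟨n - (i + 1), fun k => f (i + 1 + k), rfl, ?_,
        fun k hk => hf (i + 1 + k) (by omega)⟩
      exact congr_arg f (Nat.add_sub_cancel' hi)
  · rintro ⟨x, y, hax, hxy, hyb⟩
    induction hax using Relation.ReflTransGen.head_induction_on with
    | refl =>
      obtain ⟨n, f, rfl, rfl, hf⟩ := exists_path_iff_reflTransGen.mpr hyb
      refine ⟨n + 1, fun k => Nat.casesOn k x f, rfl, rfl, fun i hi => ?_, 0, n.succ_pos, ?_⟩
      · cases i with
        | zero => exact fwd_of_dir hxy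
        | succ i => exact hf i (by omega)
      · exact hxy
    | @head a c hac _ ih =>
      obtain ⟨n, f, rfl, rfl, hf, j, hj, hdir⟩ := ih
      refine ⟨n + 1, fun k => Nat.casesOn k a f, rfl, rfl, fun i hi => ?_, j + 1, by omega, hdir⟩
      cases i with
      | zero => exact hac
      | succ i => exact hf i (by omega)

lemma descends_of_dir {a b : V} (h : G.dir a b) : G.descends a b :=
  descends_iff.mpr ⟨a, b, .refl, h, .refl⟩

lemma descends.trans_reach {a b c : V} (h : G.descends a b)
    (hbc : Relation.ReflTransGen G.fwd b c) : G.descends a c := by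
  obtain ⟨x, y, hax, hxy, hyb⟩ := descends_iff.mp h
  exact descends_iff.mpr ⟨x, y, hax, hxy, hyb.trans hbc⟩

lemma descends.reach {a b : V} (h : G.descends a b) : Relation.ReflTransGen G.fwd a b := by
  obtain ⟨x, y, hax, hxy, hyb⟩ := descends_iff.mp h
  exact (hax.tail (fwd_of_dir hxy)).trans hyb

lemma IsTopoOrder.le_of_reach {π : V → ℕ} (hπ : G.IsTopoOrder π) {a b : V}
    (h : Relation.ReflTransGen G.fwd a b) : π a ≤ π b := by
  induction h with
  | refl => exact le_rfl
  | tail _ hbc ih =>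
    rcases hbc with hbc | hbc
    · exact ih.trans (hπ.1 _ _ (.single hbc)).le
    · exact ih.trans (hπ.2 _ _ hbc).le

lemma IsTopoOrder.lt_of_descends {π : V → ℕ} (hπ : G.IsTopoOrder π) {a b : V}
    (h : G.descends a b) : π a < π b := by
  obtain ⟨x, y, hax, hxy, hyb⟩ := descends_iff.mp h
  exact (hπ.le_of_reach hax).trans_lt ((hπ.2 _ _ hxy).trans_le (hπ.le_of_reach hyb))

section Finite

variable [Fintype V]

lemma mem_fa_singleton {i b : V} : b ∈ G.fa {i} ↔ G.solid b i := by simp [fa]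

lemma mem_mo_singleton {i b : V} : b ∈ G.mo {i} ↔ G.dashed b i := by simp [mo]

lemma mem_cc {i j : V} : j ∈ G.cc i ↔ G.uconn i j := by simp [cc]

lemma mem_nd {K : Finset V} {b : V} : b ∈ G.nd K ↔ ∀ a ∈ K, ¬ G.descends a b := by simp [nd]

lemma mem_nd_of_reach {K : Finset V} {a b : V} (hb : b ∈ G.nd K)
    (hab : Relation.ReflTransGen G.fwd a b) : a ∈ G.nd K :=
  mem_nd.mpr fun k hk h => mem_nd.mp hb k hk (h.trans_reach hab)

lemma fa_singleton_subset {K : Finset V} {i : V} (hi : i ∈ K) : G.fa {i} ⊆ G.fa K := by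
  intro b hb
  simp only [fa, Finset.mem_filter_univ]
  exact ⟨i, hi, mem_fa_singleton.mp hb⟩

lemma mo_singleton_subset {K : Finset V} {i : V} (hi : i ∈ K) : G.mo {i} ⊆ G.mo K := by
  intro b hb
  simp only [mo, Finset.mem_filter_univ]
  exact ⟨i, hi, mem_mo_singleton.mp hb⟩

variable [DecidableEq V]

lemma mem_pa {K : Finset V} {b : V} : b ∈ G.pa K ↔ ∃ a ∈ K, G.dir b a := by
  simp only [pa, fa, mo, dir, Finset.mem_union, Finset.mem_filter_univ]
  constructor
  · rintro (⟨a, ha, h⟩ | ⟨a, ha, h⟩)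
    exacts [⟨a, ha, .inl h⟩, ⟨a, ha, .inr h⟩]
  · rintro ⟨a, ha, h | h⟩
    exacts [.inl ⟨a, ha, h⟩, .inr ⟨a, ha, h⟩]

lemma cc_mem_ccs (i : V) : G.cc i ∈ G.ccs := Finset.mem_image_of_mem _ (Finset.mem_univ i)

end Finite

end PreGraph

namespace ChainGraph

open PreGraph

variable (G : ChainGraph V)

lemma not_descends_self (a : V) : ¬ G.toPreGraph.descends a a := by
  intro h
  obtain ⟨x, y, hax, hxy, hya⟩ := descends_iff.mp h
  obtain ⟨n, f, rfl, hn, hf⟩ := exists_path_iff_reflTransGen.mpr (hya.trans hax)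
  refine G.no_semidirected_cycle ⟨fun k => Nat.casesOn k x f, n + 1, by omega, hn, hxy,
    fun i hi => ?_⟩
  cases i with
  | zero => exact fwd_of_dir hxy
  | succ i => exact hf i (by omega)

variable [Fintype V]

lemma cc_subset_nd (i : V) : G.toPreGraph.cc i ⊆ G.toPreGraph.nd (G.toPreGraph.cc i) := by
  intro b hb
  refine mem_nd.mpr fun a ha h => G.not_descends_self a (h.trans_reach (reach_of_uconn ?_))
  exact (uconn_symm (mem_cc.mp hb)).trans (mem_cc.mp ha)

/-- The number of ancestors of a node. -/
def ancCard (v : V) : ℕ := (Finset.univ.filter fun a => G.toPreGraph.descends a v).card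

lemma ancCard_le_of_reach {a b : V} (h : Relation.ReflTransGen G.toPreGraph.fwd a b) :
    G.ancCard a ≤ G.ancCard b :=
  Finset.card_le_card <| Finset.monotone_filter_right _ fun _ _ hx => hx.trans_reach h

lemma isTopoOrder_ancCard : G.toPreGraph.IsTopoOrder G.ancCard := by
  refine ⟨fun a b h => le_antisymm (G.ancCard_le_of_reach (reach_of_uconn h))
    (G.ancCard_le_of_reach (reach_of_uconn (uconn_symm h))), fun a b h => ?_⟩
  refine Finset.card_lt_card (Finset.ssubset_iff_of_subset
    (Finset.monotone_filter_right _ fun _ _ hx => hx.trans_reach (.single (fwd_of_dir h))) |>.mpr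
      ⟨a, ?_, ?_⟩)
  · simpa using descends_of_dir h
  · simpa using G.not_descends_self a

variable [DecidableEq V]

lemma mem_nd_of_mem_pa {i b : V} (hb : b ∈ G.toPreGraph.pa (G.toPreGraph.cc i)) :
    b ∈ G.toPreGraph.nd (G.toPreGraph.cc i) ∧ b ∉ G.toPreGraph.cc i := by
  obtain ⟨a, ha, hba⟩ := mem_pa.mp hb
  have hand := G.cc_subset_nd i ha
  exact ⟨mem_nd_of_reach hand (.single (fwd_of_dir hba)),
    fun hbK => mem_nd.mp hand b hbK (descends_of_dir hba)⟩

/-- Some topological ordering puts exactly the non-descendants of a component before it. -/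
lemma exists_isTopoOrder_lt_iff (i : V) : ∃ π : V → ℕ, G.toPreGraph.IsTopoOrder π ∧
    ∀ b, π b < π i ↔ b ∈ G.toPreGraph.nd (G.toPreGraph.cc i) ∧ b ∉ G.toPreGraph.cc i := by
  set K := G.toPreGraph.cc i with hK
  have hiK : i ∈ K := mem_cc.mpr .refl
  have hle (v : V) : G.ancCard v < Fintype.card V + 1 := Nat.lt_succ_of_le (Finset.card_le_univ _)
  obtain ⟨hanc, hanc'⟩ := G.isTopoOrder_ancCard
  refine ⟨fun v => if v ∈ K then Fintype.card V + 1 else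
    if v ∈ G.toPreGraph.nd K then G.ancCard v else Fintype.card V + 2 + G.ancCard v,
    ⟨fun a b hab => ?_, fun a b hab => ?_⟩, fun b => ?_⟩
  · have h1 : a ∈ K ↔ b ∈ K :=
      ⟨fun h => mem_cc.mpr ((mem_cc.mp h).trans hab),
        fun h => mem_cc.mpr ((mem_cc.mp h).trans (uconn_symm hab))⟩
    have h2 : a ∈ G.toPreGraph.nd K ↔ b ∈ G.toPreGraph.nd K :=
      ⟨fun h => mem_nd_of_reach h (reach_of_uconn (uconn_symm hab)),
        fun h => mem_nd_of_reach h (reach_of_uconn hab)⟩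
    simp only [h1, h2, hanc a b hab]
  · have h1 : b ∈ G.toPreGraph.nd K → a ∈ G.toPreGraph.nd K ∧ a ∉ K := fun h =>
      ⟨mem_nd_of_reach h (.single (fwd_of_dir hab)),
        fun ha => mem_nd.mp h a ha (descends_of_dir hab)⟩
    have h2 : b ∈ K → b ∈ G.toPreGraph.nd K := fun h => G.cc_subset_nd i h
    have h3 : a ∈ K → a ∈ G.toPreGraph.nd K := fun h => G.cc_subset_nd i h
    have h4 := hanc' a b hab
    have h5 := hle a
    dsimp only
    split_ifs <;> first | omega | (exfalso; tauto)
  · have h1 := hle b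
    simp only [hiK, if_true]
    split_ifs with h2 h3
    · simp [h2]
    · simp [h2, h3, h1]
    · simp [h3]
      omega

lemma eq1_iff {S : Matrix V V ℝ} (hS : S.PosDef) : G.toPreGraph.eq1 S ↔
    ∀ i, gaussCI S (G.toPreGraph.cc i)
      (G.toPreGraph.nd (G.toPreGraph.cc i) \ G.toPreGraph.cc i)
      (G.toPreGraph.pa (G.toPreGraph.cc i)) := by
  constructor
  · intro h i
    obtain ⟨π, hπ, hlt⟩ := G.exists_isTopoOrder_lt_iff i
    rw [gaussCI_iff_exists hS]
    intro a ha
    obtain ⟨c, hc, hck⟩ := (gaussCI_iff_exists hS _ _ _).mp (h π hπ i) a ha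
    refine ⟨c, hc, fun k hk => hck k ?_⟩
    by_cases hkp : k ∈ G.toPreGraph.pa (G.toPreGraph.cc i)
    · exact .inl hkp
    · refine .inr ?_
      have hk' := Finset.mem_sdiff.mp (hk.resolve_left hkp)
      simpa [hkp] using (hlt k).mpr hk'
  · intro h π hπ i
    rw [gaussCI_iff_exists hS]
    intro a ha
    obtain ⟨c, hc, hck⟩ := (gaussCI_iff_exists hS _ _ _).mp (h i) a ha
    refine ⟨c, hc, fun k hk => hck k (hk.imp_right fun hk => ?_)⟩
    have hki : π k < π i := by simpa using (Finset.mem_sdiff.mp hk).1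
    rw [Finset.mem_sdiff]
    refine ⟨mem_nd.mpr fun b hb hbk => ?_, fun hkK => ?_⟩
    · have := hπ.lt_of_descends hbk
      have := hπ.1 _ _ (mem_cc.mp hb)
      omega
    · have := hπ.1 _ _ (mem_cc.mp hkK)
      omega

end ChainGraph

namespace ChainGraph

open PreGraph

variable [Fintype V] [DecidableEq V] (G : ChainGraph V)

lemma exists_cc_eq {K : Finset V} (hK : K ∈ G.toPreGraph.ccs) : ∃ k, K = G.toPreGraph.cc k := by
  obtain ⟨k, -, rfl⟩ := Finset.mem_image.mp hK
  exact ⟨k, rfl⟩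

lemma subset_nd {K : Finset V} (hK : K ∈ G.toPreGraph.ccs) : K ⊆ G.toPreGraph.nd K := by
  obtain ⟨k, rfl⟩ := G.exists_cc_eq hK
  exact G.cc_subset_nd k

lemma pa_subset_nd_sdiff {K : Finset V} (hK : K ∈ G.toPreGraph.ccs) :
    G.toPreGraph.pa K ⊆ G.toPreGraph.nd K \ K := by
  obtain ⟨k, rfl⟩ := G.exists_cc_eq hK
  exact fun b hb => Finset.mem_sdiff.mpr (G.mem_nd_of_mem_pa hb)

lemma disjoint_pa {K : Finset V} (hK : K ∈ G.toPreGraph.ccs) : Disjoint K (G.toPreGraph.pa K) :=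
  Finset.disjoint_of_subset_right (G.pa_subset_nd_sdiff hK) Finset.disjoint_sdiff

lemma eq1_and_eq6_iff (hG : G.IsUCG) {S : Matrix V V ℝ} (hS : S.PosDef) :
    G.toPreGraph.eq1 S ∧ G.toPreGraph.eq6 S ↔ ∀ K ∈ G.toPreGraph.ccs, ∀ i ∈ K,
      gaussCI S {i}
        (((G.toPreGraph.nd K \ K) \ G.toPreGraph.fa K) \ G.toPreGraph.mo {i})
        (G.toPreGraph.fa K ∪ G.toPreGraph.mo {i}) := by
  rw [G.eq1_iff hS]
  constructor
  · rintro ⟨h1, h6⟩ K hK i hi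
    obtain ⟨k, rfl⟩ := G.exists_cc_eq hK
    obtain ⟨c, hc, hck⟩ := (gaussCI_iff_exists hS _ _ _).mp (h1 k) i hi
    have hpa := G.pa_subset_nd_sdiff hK
    have hreg := regCoef_eq hS ⟨i, hi⟩ hc fun v hv => hck v (.inl hv)
    refine (gaussCI_singleton_iff hS _ _ _).mpr ⟨c, fun v hv => ?_, fun v hv => hck v ?_⟩
    · by_cases hvp : v ∈ G.toPreGraph.pa (G.toPreGraph.cc k)
      · rw [Finset.mem_union, not_or] at hv
        rw [← hreg, regCoef, extendZero_of_mem _ hvp]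
        exact h6 _ hK i hi v hvp ((Finset.mem_union.mp hvp).resolve_left hv.1) hv.2
      · exact hc v hvp
    · rcases hv with hv | hv
      · exact .inl (Finset.union_subset_union_right (mo_singleton_subset hi) hv)
      · exact .inr (Finset.mem_sdiff.mp (Finset.mem_sdiff.mp hv).1).1
  · intro h
    have key : ∀ K ∈ G.toPreGraph.ccs, ∀ i ∈ K, ∃ c : V → ℝ,
        (∀ v, v ∉ G.toPreGraph.fa K ∪ G.toPreGraph.mo {i} → c v = 0) ∧
        (∀ v, v ∉ G.toPreGraph.pa K → c v = 0) ∧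
        ∀ k ∈ G.toPreGraph.nd K \ K, S i k = (c ᵥ* S) k := by
      intro K hK i hi
      obtain ⟨c, hc, hck⟩ := (gaussCI_singleton_iff hS _ _ _).mp (h K hK i hi)
      refine ⟨c, hc, fun v hv => hc v fun hv' =>
        hv (Finset.union_subset_union_right (mo_singleton_subset hi) hv'), fun v hv => hck v ?_⟩
      simp only [Finset.mem_union, Finset.mem_sdiff] at hv ⊢
      tauto
    refine ⟨fun k => (gaussCI_iff_exists hS _ _ _).mpr fun i hi => ?_,
      fun K hK i hi j hj hjm hjn => ?_⟩
    · obtain ⟨c, -, hc, hck⟩ := key _ (cc_mem_ccs k) i hi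
      exact ⟨c, hc, fun v hv => hck v (hv.elim (fun h => G.pa_subset_nd_sdiff (cc_mem_ccs k) h) id)⟩
    · obtain ⟨c, hc', hc, hck⟩ := key K hK i hi
      have hreg := regCoef_eq hS (X := K) ⟨i, hi⟩ hc fun v hv => hck v (G.pa_subset_nd_sdiff hK hv)
      have hcj : c j = 0 := hc' j fun hj' => (Finset.mem_union.mp hj').elim
        (fun hf => Finset.disjoint_left.mp (hG K hK) hf hjm) hjn
      rwa [← hreg, regCoef, extendZero_of_mem _ hj] at hcj

lemma eq7_iff (hG : G.IsUCG) {S : Matrix V V ℝ} (hS : S.PosDef) (h1 : G.toPreGraph.eq1 S) :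
    G.toPreGraph.eq7 S ↔ ∀ K ∈ G.toPreGraph.ccs, ∀ i ∈ K,
      gaussCI S {i}
        (((G.toPreGraph.nd K \ K) \ G.toPreGraph.fa {i}) \ G.toPreGraph.mo K)
        ((K \ {i}) ∪ G.toPreGraph.fa {i} ∪ G.toPreGraph.mo K) := by
  rw [eq7]
  refine forall₂_congr fun K hK => forall₂_congr fun i hi => ?_
  have hCI : gaussCI S K (G.toPreGraph.nd K \ K) (G.toPreGraph.pa K) := by
    obtain ⟨k, rfl⟩ := G.exists_cc_eq hK
    exact (G.eq1_iff hS).mp h1 k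
  have hKP := G.disjoint_pa hK
  have hpa := G.pa_subset_nd_sdiff hK
  have hfa := fa_singleton_subset (G := G.toPreGraph) hi
  have hmem (v : V) : v ∈ G.toPreGraph.pa K ↔ v ∈ G.toPreGraph.fa K ∨ v ∈ G.toPreGraph.mo K :=
    Finset.mem_union
  have hi' : i ∉ G.toPreGraph.pa K := Finset.disjoint_left.mp hKP hi
  have hZ : ∀ v ∈ (K \ {i}) ∪ G.toPreGraph.fa {i} ∪ G.toPreGraph.mo K,
      v ∈ K ∪ G.toPreGraph.pa K ∧ v ≠ i := by
    intro v hv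
    simp only [Finset.mem_union, Finset.mem_sdiff, Finset.mem_singleton] at hv ⊢
    rcases hv with (hv | hv) | hv
    · exact ⟨.inl hv.1, hv.2⟩
    · have := (hmem v).mpr (.inl (hfa hv))
      exact ⟨.inr this, fun h => hi' (h ▸ this)⟩
    · have := (hmem v).mpr (.inr hv)
      exact ⟨.inr this, fun h => hi' (h ▸ this)⟩
  have hprec := exists_coef_iff_precRow hS ⟨i, Finset.mem_union_left _ hi⟩ hZ
  rw [gaussCI_singleton_iff hS]
  trans (∃ c : V → ℝ,
      (∀ v, v ∉ (K \ {i}) ∪ G.toPreGraph.fa {i} ∪ G.toPreGraph.mo K → c v = 0) ∧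
      ∀ k ∈ K ∪ G.toPreGraph.pa K, k ≠ i → S i k = (c ᵥ* S) k)
  · rw [hprec]
    constructor
    · intro h j hj hji hjZ
      simp only [Finset.mem_union, Finset.mem_sdiff, Finset.mem_singleton, not_or] at hj hjZ
      have hjP : j ∈ G.toPreGraph.pa K := hj.resolve_left fun h => hjZ.1.1 ⟨h, hji⟩
      rw [precRow, extendZero_of_mem _ (Finset.mem_union_right _ hjP)]
      exact h j hjP (((hmem j).mp hjP).resolve_right hjZ.2) hjZ.1.2
    · intro h j hj hjf hjn
      have hjm : j ∉ G.toPreGraph.mo K := Finset.disjoint_left.mp (hG K hK) hjf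
      have hjK : j ∉ K := Finset.disjoint_right.mp hKP hj
      have := h j (Finset.mem_union_right _ hj) (fun h => hjK (h ▸ hi))
        (by simp [hjK, hjn, hjm])
      rwa [precRow, extendZero_of_mem _ (Finset.mem_union_right _ hj)] at this
  · refine exists_congr fun c => and_congr_right fun hc =>
      ⟨fun h k hk => ?_, fun h k hk hki => h k ?_⟩
    · by_cases hkW : k ∈ K ∪ G.toPreGraph.pa K
      · refine h k hkW ?_
        rcases hk with hk | hk
        · exact (hZ k hk).2
        · rintro rfl
          simp [hi] at hk
      · have hkN : k ∈ G.toPreGraph.nd K \ K :=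
          (Finset.mem_sdiff.mp (Finset.mem_sdiff.mp
            (hk.resolve_left fun hk => hkW (hZ k hk).1)).1).1
        have := vecMul_eq_zero_of_gaussCI hS hKP hCI (r := Pi.single i 1 - c)
          (fun v hv => by
            have hvi : v ≠ i := fun h => hv (h ▸ Finset.mem_union_left _ hi)
            simp [hvi, hc v fun hv' => hv (hZ v hv').1])
          (fun v hv => by
            have hvi : v ≠ i := fun h => hi' (h ▸ hv)
            simp [Matrix.sub_vecMul, ← h v (Finset.mem_union_right _ hv) hvi]) hkN
        simpa [Matrix.sub_vecMul, sub_eq_zero] using this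
    · have hkP := fun h => Finset.mem_sdiff.mp (@hpa k h)
      simp only [Finset.mem_union, Finset.mem_sdiff, Finset.mem_singleton] at hk ⊢
      tauto

lemma eq8_iff {S : Matrix V V ℝ} (hS : S.PosDef) :
    G.toPreGraph.eq8 S ↔ ∀ K ∈ G.toPreGraph.ccs, ∀ i ∈ K, ∀ j ∈ K, j ≠ i →
      j ∉ G.toPreGraph.nb {i} → gaussCI S {i} {j} ((K \ {i, j}) ∪ G.toPreGraph.pa K) := by
  rw [eq8]
  refine forall₂_congr fun K hK => forall₂_congr fun i hi => forall₂_congr fun j hj =>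
    forall₂_congr fun hji _ => ?_
  have hKP := G.disjoint_pa hK
  have hi' : i ∉ G.toPreGraph.pa K := Finset.disjoint_left.mp hKP hi
  have hj' : j ∉ G.toPreGraph.pa K := Finset.disjoint_left.mp hKP hj
  have hZ : ∀ v, v ∈ (K \ {i, j}) ∪ G.toPreGraph.pa K ↔
      v ∈ K ∪ G.toPreGraph.pa K ∧ v ≠ i ∧ v ≠ j := by
    intro v
    have h1 : v ∈ G.toPreGraph.pa K → v ≠ i ∧ v ≠ j :=
      fun h => ⟨fun e => hi' (e ▸ h), fun e => hj' (e ▸ h)⟩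
    simp only [Finset.mem_union, Finset.mem_sdiff, Finset.mem_insert, Finset.mem_singleton]
    tauto
  have hjW : j ∈ K ∪ G.toPreGraph.pa K := Finset.mem_union_left _ hj
  rw [lam, inv_condCov_apply hS hKP, gaussCI_singleton_iff hS]
  trans (∃ c : V → ℝ, (∀ v, v ∉ (K \ {i, j}) ∪ G.toPreGraph.pa K → c v = 0) ∧
      ∀ k ∈ K ∪ G.toPreGraph.pa K, k ≠ i → S i k = (c ᵥ* S) k)
  · rw [exists_coef_iff_precRow hS ⟨i, Finset.mem_union_left _ hi⟩
      fun v hv => ⟨((hZ v).mp hv).1, ((hZ v).mp hv).2.1⟩]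
    constructor
    · intro h v hvW hvi hvZ
      obtain rfl : v = j := by
        by_contra hvj
        exact hvZ ((hZ v).mpr ⟨hvW, hvi, hvj⟩)
      exact h
    · exact fun h => h j hjW hji fun hjZ => ((hZ j).mp hjZ).2.2 rfl
  · refine exists_congr fun c => and_congr_right fun _ => forall_congr' fun k => ?_
    rw [← and_imp]
    refine imp_congr_left ?_
    rw [hZ, Finset.mem_singleton]
    by_cases hkj : k = j
    · subst hkj
      simp only [hjW, hji, ne_eq, not_false_eq_true, and_self, or_true]
    · simp [hkj]

end ChainGraph

/-- **Theorem 4.** A Gaussian distribution `N(0, Σ)` with positive definite `Σ` satisfies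
Equation 1 and the zero restrictions of Equations 6–8 with respect to a UCG `G` if and only
if it satisfies the block-recursive Markov property with respect to `G`. -/
theorem ucg_zero_restrictions_iff_block_recursive_markov
    {V : Type*} [Fintype V] [DecidableEq V] (G : ChainGraph V) (hG : G.IsUCG)
    (S : Matrix V V ℝ) (hS : S.PosDef) :
    G.toPreGraph.eqs S ↔ G.toPreGraph.blockRecMP (gaussCI S) := by
  rw [PreGraph.eqs, ← and_assoc, G.eq1_and_eq6_iff hG hS, G.eq8_iff hS]
  constructor
  · rintro ⟨h1, h7, h8⟩ K hK i hi
    have he := ((G.eq1_and_eq6_iff hG hS).mpr h1).1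
    exact ⟨h1 K hK i hi, (G.eq7_iff hG hS he).mp h7 K hK i hi, h8 K hK i hi⟩
  · intro h
    have h1 := fun K hK i hi => (h K hK i hi).1
    have he := ((G.eq1_and_eq6_iff hG hS).mpr h1).1
    exact ⟨h1, (G.eq7_iff hG hS he).mpr fun K hK i hi => (h K hK i hi).2.1,
      fun K hK i hi => (h K hK i hi).2.2⟩
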